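/- Let F be an algebraically closed field. Every nontrivial 2-dimensional evolution algebra over F, given by a nonzero matrix of structure constants E = [[a,0,0,b],[c,0,0,d]] (rows index the output coordinate, columns the pairs (1,1),(1,2),(2,1),(2,2)), is isomorphic to at least one of the following algebras given by their MSC: E1(b',c') = [[1,0,0,b'],[c',0,0,1]] with b'c' ≠ 1; E2(b') = [[1,0,0,b'],[1,0,0,0]] with b' ∈ F; E3 = [[0,0,0,1],[1,0,0,0]]; E4 = [[1,0,0,1],[0,0,0,0]]; E5 = [[1,0,0,-1],[-1,0,0,1]]; E6 = [[0,0,0,1],[0,0,0,0]]. That is, there exists g ∈ GL(2,F) such that the MSC of the second algebra equals g·E·(g⁻¹ ⊗ g⁻¹). -/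

import Mathlib

open Matrix Kronecker

variable {F : Type*}

/-- The Kronecker (tensor) product of two `2 × 2` matrices, realized as a `4 × 4` matrix;
rows/columns are indexed in row-major order by the pairs `(1,1), (1,2), (2,1), (2,2)`. -/
def kron [CommRing F] (g h : Matrix (Fin 2) (Fin 2) F) : Matrix (Fin 4) (Fin 4) F :=
  Matrix.reindex finProdFinEquiv finProdFinEquiv (g ⊗ₖ h)

/-- Two `2`-dimensional algebras given by matrices of structure constants `A, B`
are isomorphic iff `B = g · A · (g⁻¹ ⊗ g⁻¹)` for some `g ∈ GL(2, F)`. -/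
def Isomorphic [Field F] (A B : Matrix (Fin 2) (Fin 4) F) : Prop :=
  ∃ g : GL (Fin 2) F,
    B = (g : Matrix (Fin 2) (Fin 2) F) * A *
        kron ((↑(g⁻¹) : Matrix (Fin 2) (Fin 2) F)) ((↑(g⁻¹) : Matrix (Fin 2) (Fin 2) F))

/-- The automorphism group of the algebra with MSC `E`, as a set of (invertible) `2 × 2`
matrices: `Aut(E) = {g ∈ GL(2,F) : g·E = E·(g ⊗ g)}`. -/
def Aut [Field F] (E : Matrix (Fin 2) (Fin 4) F) : Set (Matrix (Fin 2) (Fin 2) F) :=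
  {g | IsUnit g ∧ g * E = E * kron g g}

/-- The derivation algebra of the algebra with MSC `E`:
`Der(E) = { D : E·(D ⊗ I + I ⊗ D) = D·E }`. -/
def Der [Field F] (E : Matrix (Fin 2) (Fin 4) F) : Set (Matrix (Fin 2) (Fin 2) F) :=
  {D | E * (kron D 1 + kron 1 D) = D * E}

/-!
Encode an evolution algebra by the `2 × 2` matrix `S` whose columns are the squares `e₁²`, `e₂²`.
If `S` is invertible, rescaling `e₁` and `e₂` (after exchanging them if necessary) already leads to
`E₁`, `E₂` or `E₃`, with a cube root needed for `E₃` only. If `S` has rank one, say `e₁² = u` and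
`e₂² = t u` with `u = a e₁ + c e₂`, then `u² = (a² + t c²) u`. When `t = 0`, this is `E₂(0)` or
`E₆`. When `t ≠ 0` and `u² = 0`, rescaling gives `E₅`. When `t ≠ 0` and `u² ≠ 0`, a square root of
`t` reduces to `t = 1`; then `u / (a² + c²)` is idempotent, and together with its quarter turn
`(-c e₁ + a e₂) / (a² + c²)` it is a natural basis of `E₄`.
-/

/-- The matrix of structure constants of the evolution algebra whose natural basis squares to the
columns of `S`, that is, `e_j² = ∑ i, S i j • e_i`. -/
def evolutionMSC [Zero F] (S : Matrix (Fin 2) (Fin 2) F) : Matrix (Fin 2) (Fin 4) F :=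
  !![S 0 0, 0, 0, S 0 1; S 1 0, 0, 0, S 1 1]

section ChangeOfBasis

theorem kron_eq_of [CommRing F] (g h : Matrix (Fin 2) (Fin 2) F) :
    kron g h =
      !![g 0 0 * h 0 0, g 0 0 * h 0 1, g 0 1 * h 0 0, g 0 1 * h 0 1;
         g 0 0 * h 1 0, g 0 0 * h 1 1, g 0 1 * h 1 0, g 0 1 * h 1 1;
         g 1 0 * h 0 0, g 1 0 * h 0 1, g 1 1 * h 0 0, g 1 1 * h 0 1;
         g 1 0 * h 1 0, g 1 0 * h 1 1, g 1 1 * h 1 0, g 1 1 * h 1 1] := by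
  ext i j
  fin_cases i <;> fin_cases j <;> rfl

theorem kron_mul_kron [CommRing F] (g h g' h' : Matrix (Fin 2) (Fin 2) F) :
    kron g h * kron g' h' = kron (g * g') (h * h') := by
  simp only [kron, reindex_apply, submatrix_mul_equiv, mul_kronecker_mul]

theorem mul_evolutionMSC [NonUnitalNonAssocSemiring F] (P S : Matrix (Fin 2) (Fin 2) F) :
    P * evolutionMSC S = evolutionMSC (P * S) := by
  ext i j
  fin_cases i <;> fin_cases j <;> simp [evolutionMSC, mul_apply, Fin.sum_univ_succ]

/-- The hypothesis says that the columns of `P` multiply to zero in the algebra given by `S`. -/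
theorem evolutionMSC_mul_kron_self [CommRing F] {S P : Matrix (Fin 2) (Fin 2) F}
    (hP : S *ᵥ (P.col 0 * P.col 1) = 0) :
    evolutionMSC S * kron P P = evolutionMSC (S * (P ⊙ P)) := by
  have h (i : Fin 2) : S i 0 * (P 0 0 * P 0 1) + S i 1 * (P 1 0 * P 1 1) = 0 := by
    simpa [mulVec, dotProduct, Fin.sum_univ_succ] using congrFun hP i
  rw [kron_eq_of]
  ext i j
  fin_cases i <;> fin_cases j <;>
    simp [evolutionMSC, mul_apply, Fin.sum_univ_succ] <;> grind

variable [Field F]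

theorem Isomorphic.trans {A B C : Matrix (Fin 2) (Fin 4) F} (hAB : Isomorphic A B)
    (hBC : Isomorphic B C) : Isomorphic A C := by
  obtain ⟨g, rfl⟩ := hAB
  obtain ⟨h, rfl⟩ := hBC
  refine ⟨h * g, ?_⟩
  simp only [_root_.mul_inv_rev, Units.val_mul, ← kron_mul_kron, Matrix.mul_assoc]

theorem isomorphic_of_mul_kron_eq {A B : Matrix (Fin 2) (Fin 4) F} (P : GL (Fin 2) F)
    (h : A * kron P.val P.val = P.val * B) : Isomorphic A B := by
  refine ⟨P⁻¹, ?_⟩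
  rw [inv_inv, Matrix.mul_assoc, h, ← Matrix.mul_assoc, ← Units.val_mul, inv_mul_cancel,
    Units.val_one, Matrix.one_mul]

theorem isomorphic_evolutionMSC {S T : Matrix (Fin 2) (Fin 2) F} (P : Matrix (Fin 2) (Fin 2) F)
    (hdet : P.det ≠ 0) (horth : S *ᵥ (P.col 0 * P.col 1) = 0) (hsq : S * (P ⊙ P) = P * T) :
    Isomorphic (evolutionMSC S) (evolutionMSC T) := by
  refine isomorphic_of_mul_kron_eq (GeneralLinearGroup.mkOfDetNeZero P hdet) ?_
  change evolutionMSC S * kron P P = P * evolutionMSC T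
  rw [evolutionMSC_mul_kron_self horth, hsq, mul_evolutionMSC]

theorem isomorphic_evolutionMSC_swap (a b c d : F) :
    Isomorphic (evolutionMSC !![a, b; c, d]) (evolutionMSC !![d, c; b, a]) := by
  apply isomorphic_evolutionMSC !![0, 1; 1, 0]
  · simp
  · ext i; fin_cases i <;> simp [mulVec, dotProduct]
  · ext i j; fin_cases i <;> fin_cases j <;> simp [mul_apply]

theorem isomorphic_evolutionMSC_rescale (a b c d : F) {x y : F} (hx : x ≠ 0) (hy : y ≠ 0) :
    Isomorphic (evolutionMSC !![a, b; c, d])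
      (evolutionMSC !![x * a, y ^ 2 * b / x; x ^ 2 * c / y, y * d]) := by
  apply isomorphic_evolutionMSC !![x, 0; 0, y]
  · simp [hx, hy]
  · ext i; fin_cases i <;> simp [mulVec, dotProduct]
  · ext i j; fin_cases i <;> fin_cases j <;> simp [mul_apply, field]

end ChangeOfBasis

section NormalForms

variable [Field F] {a b c d t x : F}

theorem isomorphic_e1 (ha : a ≠ 0) (hd : d ≠ 0) :
    Isomorphic (evolutionMSC !![a, b; c, d])
      (evolutionMSC !![1, a * b / d ^ 2; c * d / a ^ 2, 1]) := by
  convert isomorphic_evolutionMSC_rescale a b c d (inv_ne_zero ha) (inv_ne_zero hd) using 5 <;>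
    field_simp

theorem isomorphic_e2 (ha : a ≠ 0) (hc : c ≠ 0) :
    Isomorphic (evolutionMSC !![a, b; c, 0]) (evolutionMSC !![1, b * c ^ 2 / a ^ 3; 1, 0]) := by
  have hy : c / a ^ 2 ≠ 0 := div_ne_zero hc (pow_ne_zero 2 ha)
  convert isomorphic_evolutionMSC_rescale a b c 0 (inv_ne_zero ha) hy using 5 <;> simp [field]

theorem isomorphic_e2_zero (ha : a ≠ 0) :
    Isomorphic (evolutionMSC !![a, 0; c, 0]) (evolutionMSC !![1, 0; 1, 0]) := by
  -- `e₂` annihilates everything, and `f = a⁻¹ e₁ + (c / a² - 1) e₂` satisfies `f² = f + e₂`.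
  apply isomorphic_evolutionMSC !![a⁻¹, 0; c / a ^ 2 - 1, 1]
  · simp [ha]
  · ext i; fin_cases i <;> simp [mulVec, dotProduct]
  · ext i j; fin_cases i <;> fin_cases j <;> simp [mul_apply, field]

theorem isomorphic_e3 (hc : c ≠ 0) (hx : x ^ 3 * (b * c ^ 2) = 1) :
    Isomorphic (evolutionMSC !![0, b; c, 0]) (evolutionMSC !![0, 1; 1, 0]) := by
  have hx0 : x ≠ 0 := by rintro rfl; simp at hx
  have hy : x ^ 2 * c ≠ 0 := mul_ne_zero (pow_ne_zero 2 hx0) hc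
  convert isomorphic_evolutionMSC_rescale 0 b c 0 hx0 hy using 5 <;> field_simp <;> grind

theorem isomorphic_e4 (hnorm : a ^ 2 + c ^ 2 ≠ 0) :
    Isomorphic (evolutionMSC !![a, a; c, c]) (evolutionMSC !![1, 1; 0, 0]) := by
  set q := a ^ 2 + c ^ 2 with hq
  apply isomorphic_evolutionMSC !![a / q, -c / q; c / q, a / q]
  · have hdet : a / q * (a / q) - -c / q * (c / q) = q⁻¹ := by
      field_simp
      rw [hq]
      ring
    rw [det_fin_two_of, hdet]
    exact inv_ne_zero hnorm
  · ext i; fin_cases i <;> simp [mulVec, dotProduct, field]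
  · ext i j; fin_cases i <;> fin_cases j <;> simp [mul_apply, field] <;> grind

theorem isomorphic_e5 (ha : a ≠ 0) (hnorm : a ^ 2 + t * c ^ 2 = 0) :
    Isomorphic (evolutionMSC !![a, t * a; c, t * c]) (evolutionMSC !![1, -1; -1, 1]) := by
  have hc : c ≠ 0 := by rintro rfl; simp [ha] at hnorm
  have hy : -c / a ^ 2 ≠ 0 := div_ne_zero (neg_ne_zero.2 hc) (pow_ne_zero 2 ha)
  convert isomorphic_evolutionMSC_rescale a (t * a) c (t * c) (inv_ne_zero ha) hy using 5 <;>
    field_simp <;> grind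

theorem isomorphic_e6 (hb : b ≠ 0) :
    Isomorphic (evolutionMSC !![0, b; 0, 0]) (evolutionMSC !![0, 1; 0, 0]) := by
  convert isomorphic_evolutionMSC_rescale 0 b 0 0 hb one_ne_zero using 5 <;> simp [field]

end NormalForms

section Classification

variable [Field F]

/-- The algebra with matrix of structure constants `A` is isomorphic to one of the algebras
`E₁(b, c)` with `b * c ≠ 1`, `E₂(b)`, `E₃`, `E₄`, `E₅`, `E₆` of the classification; the
constructors follow this numbering. -/
inductive HasNormalForm (A : Matrix (Fin 2) (Fin 4) F) : Prop
  | e1 (b c : F) (hbc : b * c ≠ 1) (iso : Isomorphic A (evolutionMSC !![1, b; c, 1]))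
  | e2 (b : F) (iso : Isomorphic A (evolutionMSC !![1, b; 1, 0]))
  | e3 (iso : Isomorphic A (evolutionMSC !![0, 1; 1, 0]))
  | e4 (iso : Isomorphic A (evolutionMSC !![1, 1; 0, 0]))
  | e5 (iso : Isomorphic A (evolutionMSC !![1, -1; -1, 1]))
  | e6 (iso : Isomorphic A (evolutionMSC !![0, 1; 0, 0]))

theorem HasNormalForm.of_isomorphic {A B : Matrix (Fin 2) (Fin 4) F} (hB : HasNormalForm B)
    (hAB : Isomorphic A B) : HasNormalForm A := by
  cases hB with
  | e1 b c hbc iso => exact .e1 b c hbc (hAB.trans iso)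
  | e2 b iso => exact .e2 b (hAB.trans iso)
  | e3 iso => exact .e3 (hAB.trans iso)
  | e4 iso => exact .e4 (hAB.trans iso)
  | e5 iso => exact .e5 (hAB.trans iso)
  | e6 iso => exact .e6 (hAB.trans iso)

variable {a b c d : F}

theorem HasNormalForm.of_swap (h : HasNormalForm (evolutionMSC !![d, c; b, a])) :
    HasNormalForm (evolutionMSC !![a, b; c, d]) :=
  h.of_isomorphic (isomorphic_evolutionMSC_swap a b c d)

theorem hasNormalForm_of_det_ne_zero (hcube : ∀ x : F, ∃ y, y ^ 3 = x)
    (hdet : a * d ≠ b * c) : HasNormalForm (evolutionMSC !![a, b; c, d]) := by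
  by_cases ha : a = 0 <;> by_cases hd : d = 0
  · subst ha hd
    have hc : c ≠ 0 := by rintro rfl; simp at hdet
    have hb : b ≠ 0 := by rintro rfl; simp at hdet
    obtain ⟨x, hx⟩ := hcube (b * c ^ 2)⁻¹
    exact .e3 (isomorphic_e3 hc (x := x) (by rw [hx]; field_simp))
  · subst ha
    have hb : b ≠ 0 := by rintro rfl; simp at hdet
    exact .of_swap (.e2 _ (isomorphic_e2 hd hb))
  · subst hd
    have hc : c ≠ 0 := by rintro rfl; simp at hdet
    exact .e2 _ (isomorphic_e2 ha hc)
  · refine .e1 _ _ (fun h => hdet ?_) (isomorphic_e1 ha hd)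
    field_simp at h
    exact h.symm

theorem hasNormalForm_of_second_sq_eq_zero (h : a ≠ 0 ∨ c ≠ 0) :
    HasNormalForm (evolutionMSC !![a, 0; c, 0]) := by
  by_cases ha : a = 0
  · subst ha
    exact .of_swap (.e6 (isomorphic_e6 (by simpa using h)))
  · exact .e2 0 (isomorphic_e2_zero ha)

theorem hasNormalForm_of_parallel_sq (hsqrt : ∀ x : F, IsSquare x) (t : F)
    (h : a ≠ 0 ∨ c ≠ 0) : HasNormalForm (evolutionMSC !![a, t * a; c, t * c]) := by
  by_cases ht : t = 0
  · simpa [ht] using hasNormalForm_of_second_sq_eq_zero h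
  by_cases hnorm : a ^ 2 + t * c ^ 2 = 0
  · have ha : a ≠ 0 := by rintro rfl; simp_all
    exact .e5 (isomorphic_e5 ha hnorm)
  · obtain ⟨s, rfl⟩ := (hsqrt t).exists_sq
    have hs : s ≠ 0 := ne_zero_pow two_ne_zero ht
    rw [← mul_pow] at hnorm
    refine (HasNormalForm.e4 (isomorphic_e4 hnorm)).of_isomorphic ?_
    convert isomorphic_evolutionMSC_rescale a (s ^ 2 * a) c (s ^ 2 * c) one_ne_zero (inv_ne_zero hs)
      using 5 <;> field_simp

theorem hasNormalForm_of_det_eq_zero (hsqrt : ∀ x : F, IsSquare x) (hdet : a * d = b * c)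
    (hne : evolutionMSC !![a, b; c, d] ≠ 0) : HasNormalForm (evolutionMSC !![a, b; c, d]) := by
  by_cases hcol : a = 0 ∧ c = 0
  · obtain ⟨rfl, rfl⟩ := hcol
    refine .of_swap (hasNormalForm_of_second_sq_eq_zero ?_)
    contrapose! hne
    simp [hne, evolutionMSC, ← Matrix.ext_iff, Fin.forall_fin_succ]
  · have hcol : a ≠ 0 ∨ c ≠ 0 := not_and_or.1 hcol
    obtain ⟨t, rfl, rfl⟩ : ∃ t, b = t * a ∧ d = t * c := by
      rcases hcol with ha | hc
      · exact ⟨b / a, by field_simp, by field_simp; grind⟩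
      · exact ⟨d / c, by field_simp; grind, by field_simp⟩
    exact hasNormalForm_of_parallel_sq hsqrt t hcol

end Classification

theorem classification_two_dim_evolution_algebras_general
    (F : Type*) [Field F] (hsqrt : ∀ x : F, IsSquare x) (hcube : ∀ x : F, ∃ y, y ^ 3 = x)
    (a b c d : F)
    (hE : (!![a, 0, 0, b; c, 0, 0, d] : Matrix (Fin 2) (Fin 4) F) ≠ 0) :
    (∃ b' c' : F, b' * c' ≠ 1 ∧
        Isomorphic !![a, 0, 0, b; c, 0, 0, d] !![1, 0, 0, b'; c', 0, 0, 1]) ∨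
    (∃ b' : F,
        Isomorphic !![a, 0, 0, b; c, 0, 0, d] !![1, 0, 0, b'; 1, 0, 0, 0]) ∨
    Isomorphic !![a, 0, 0, b; c, 0, 0, d] !![0, 0, 0, 1; 1, 0, 0, 0] ∨
    Isomorphic !![a, 0, 0, b; c, 0, 0, d] !![1, 0, 0, 1; 0, 0, 0, 0] ∨
    Isomorphic !![a, 0, 0, b; c, 0, 0, d] !![1, 0, 0, -1; -1, 0, 0, 1] ∨
    Isomorphic !![a, 0, 0, b; c, 0, 0, d] !![0, 0, 0, 1; 0, 0, 0, 0] := by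
  have hnormal : HasNormalForm (evolutionMSC !![a, b; c, d]) := by
    by_cases hdet : a * d = b * c
    · exact hasNormalForm_of_det_eq_zero hsqrt hdet hE
    · exact hasNormalForm_of_det_ne_zero hcube hdet
  rcases hnormal with ⟨b', c', hbc, iso⟩ | ⟨b', iso⟩ | iso | iso | iso | iso
  · exact .inl ⟨b', c', hbc, iso⟩
  · exact .inr (.inl ⟨b', iso⟩)
  · exact .inr (.inr (.inl iso))
  · exact .inr (.inr (.inr (.inl iso)))
  · exact .inr (.inr (.inr (.inr (.inl iso))))
  · exact .inr (.inr (.inr (.inr (.inr iso))))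

theorem classification_two_dim_evolution_algebras
    (F : Type*) [Field F] [IsAlgClosed F] (a b c d : F)
    (hE : (!![a, 0, 0, b; c, 0, 0, d] : Matrix (Fin 2) (Fin 4) F) ≠ 0) :
    (∃ b' c' : F, b' * c' ≠ 1 ∧
        Isomorphic !![a, 0, 0, b; c, 0, 0, d] !![1, 0, 0, b'; c', 0, 0, 1]) ∨
    (∃ b' : F,
        Isomorphic !![a, 0, 0, b; c, 0, 0, d] !![1, 0, 0, b'; 1, 0, 0, 0]) ∨
    Isomorphic !![a, 0, 0, b; c, 0, 0, d] !![0, 0, 0, 1; 1, 0, 0, 0] ∨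
    Isomorphic !![a, 0, 0, b; c, 0, 0, d] !![1, 0, 0, 1; 0, 0, 0, 0] ∨
    Isomorphic !![a, 0, 0, b; c, 0, 0, d] !![1, 0, 0, -1; -1, 0, 0, 1] ∨
    Isomorphic !![a, 0, 0, b; c, 0, 0, d] !![0, 0, 0, 1; 0, 0, 0, 0] :=
  classification_two_dim_evolution_algebras_general F
    IsAlgClosed.exists_eq_mul_self (fun x => IsAlgClosed.exists_pow_nat_eq x three_pos) a b c d hE
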